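/- Let V be a finite-dimensional faithful representation of a finite group W over a field k with char(k) coprime to |W|. If k[V] is a free module over k[V]^W, then k[V]^W is a free polynomial algebra on dim V generators. -/

import Mathlib

open MvPolynomial

/-- The action of `g ∈ GL(V)` on `k[V]`: `(g·f)(x) = f(g⁻¹x)`. -/
noncomputable def glAct {n : ℕ} {k : Type*} [Field k]
    (g : LinearMap.GeneralLinearGroup k (Fin n → k)) :
    MvPolynomial (Fin n) k →ₐ[k] MvPolynomial (Fin n) k :=
  aeval fun i => ∑ j, C (((g⁻¹ :
    LinearMap.GeneralLinearGroup k (Fin n → k)) : (Fin n → k) →ₗ[k] (Fin n → k))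
      (Pi.single j 1) i) * X j

/-- The subalgebra of `G`-invariant polynomials `k[V]^G`. -/
noncomputable def invariants (n : ℕ) (k : Type*) [Field k]
    (G : Subgroup (LinearMap.GeneralLinearGroup k (Fin n → k))) :
    Subalgebra k (MvPolynomial (Fin n) k) :=
  ⨅ g ∈ G, AlgHom.equalizer (glAct g) (AlgHom.id k (MvPolynomial (Fin n) k))

/-!
Let `f₁, …, f_r ∈ A = k[V]^W` be a minimal set of homogeneous generators of the Hilbert ideal
`I = A₊ · k[V]`. Since `k[V]` is flat over `A`, every syzygy of the `fᵢ` over `k[V]` is a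
combination of syzygies over `A`, and by minimality the latter have coefficients in `A₊`; hence all
syzygies over `k[V]` have coefficients in `I`. Write `fᵢ = φ zᵢ`, where `φ : k[V]ⁿ → k[V]` sends
`eⱼ` to `xⱼ`. The property of the syzygies implies inductively that `z₁ ∧ ⋯ ∧ z_r` is nonzero modulo
`I` and the boundaries of the Koszul complex of `φ`, so `r ≤ n`. Faithful flatness descends
`I = (f₁, …, f_r)` to `A₊ = (f₁, …, f_r)`, so the `fᵢ` generate the algebra `A`, and they are
algebraically independent because `A` has transcendence degree `n`.
-/

section Syzygies

variable {R M ι : Type*} [CommRing R] [AddCommGroup M] [Module R M] [Fintype ι]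

lemma mem_smul_top_of_sum_smul_eq_zero [Module.Flat R M] {f : ι → R} {I : Ideal R} {i : ι}
    (hI : ∀ a : ι → R, ∑ j, f j * a j = 0 → a i ∈ I) {x : ι → M} (hx : ∑ j, f j • x j = 0) :
    x i ∈ I • (⊤ : Submodule R M) := by
  obtain ⟨_, a, y, hxy, ha⟩ := Module.Flat.isTrivialRelation_of_sum_smul_eq_zero hx
  rw [hxy i]
  exact Submodule.sum_mem _ fun j _ =>
    Submodule.smul_mem_smul (hI (fun l => a l j) (ha j)) Submodule.mem_top

lemma exists_eq_sum_smul_of_mem_span_range_smul_top {f : ι → R} {x : M}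
    (hx : x ∈ Ideal.span (Set.range f) • (⊤ : Submodule R M)) :
    ∃ y : ι → M, x = ∑ j, f j • y j := by
  induction hx using Submodule.smul_induction_on' with
  | smul r hr m _ =>
    obtain ⟨c, rfl⟩ := Ideal.mem_span_range_iff_exists_fun.1 hr
    exact ⟨fun j => c j • m, by simp_rw [Finset.sum_smul, smul_smul, mul_comm]⟩
  | add x _ y _ hx hy =>
    obtain ⟨v, rfl⟩ := hx
    obtain ⟨w, rfl⟩ := hy
    exact ⟨v + w, by simp_rw [Pi.add_apply, smul_add, Finset.sum_add_distrib]⟩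

end Syzygies

section Koszul

variable {R M ι : Type*} [CommRing R] [AddCommGroup M] [Module R M]

/-- The differential of the Koszul complex `⋀ M` of a linear form `φ` on `M`: the antiderivation
of the exterior algebra that extends `φ`. -/
noncomputable def koszulDifferential (φ : Module.Dual R M) :
    ExteriorAlgebra R M →ₗ[R] ExteriorAlgebra R M :=
  CliffordAlgebra.contractLeft φ

lemma koszulDifferential_one (φ : Module.Dual R M) : koszulDifferential φ 1 = 0 :=
  CliffordAlgebra.contractLeft_one _ φ

lemma koszulDifferential_ι_mul (φ : Module.Dual R M) (z : M) (w : ExteriorAlgebra R M) :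
    koszulDifferential φ (ExteriorAlgebra.ι R z * w) =
      φ z • w - ExteriorAlgebra.ι R z * koszulDifferential φ w :=
  CliffordAlgebra.contractLeft_ι_mul φ z w

lemma koszulDifferential_koszulDifferential (φ : Module.Dual R M) (w : ExteriorAlgebra R M) :
    koszulDifferential φ (koszulDifferential φ w) = 0 :=
  CliffordAlgebra.contractLeft_contractLeft φ w

lemma algebraMapInv_koszulDifferential_mem_range (φ : Module.Dual R M)
    (w : ExteriorAlgebra R M) :
    ExteriorAlgebra.algebraMapInv (koszulDifferential φ w) ∈ LinearMap.range φ := by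
  induction w using CliffordAlgebra.left_induction with
  | algebraMap s =>
    rw [Algebra.algebraMap_eq_smul_one, map_smul, koszulDifferential_one, smul_zero, map_zero]
    exact zero_mem _
  | add a b ha hb =>
    rw [map_add, map_add]
    exact add_mem ha hb
  | ι_mul a z _ =>
    have h : ExteriorAlgebra.algebraMapInv (koszulDifferential φ (ExteriorAlgebra.ι R z * a)) =
        ExteriorAlgebra.algebraMapInv a * φ z := by
      simp [koszulDifferential_ι_mul, ExteriorAlgebra.algebraMapInv, mul_comm]
    exact h ▸ Ideal.mul_mem_left _ _ (LinearMap.mem_range_self φ z)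

lemma one_notMem_range_koszulDifferential_sup {φ : Module.Dual R M}
    (hφ : LinearMap.range φ ≠ ⊤) {I : Ideal R} (hI : I ≤ LinearMap.range φ) :
    (1 : ExteriorAlgebra R M) ∉ LinearMap.range (koszulDifferential φ) ⊔ I • ⊤ := by
  intro h
  have hle : LinearMap.range (koszulDifferential φ) ⊔ I • ⊤ ≤
      Submodule.comap (ExteriorAlgebra.algebraMapInv (R := R) (M := M)).toLinearMap
        (LinearMap.range φ) := by
    refine sup_le ?_ (Submodule.smul_le.2 fun r hr w _ => ?_)
    · rintro _ ⟨w, rfl⟩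
      exact algebraMapInv_koszulDifferential_mem_range φ w
    · rw [Submodule.mem_comap, map_smul]
      exact Ideal.mul_mem_right _ _ (hI hr)
  have hone := hle h
  rw [Submodule.mem_comap, AlgHom.toLinearMap_apply, map_one] at hone
  exact hφ ((Ideal.eq_top_iff_one _).2 hone)

lemma exists_koszulDifferential_prod_ι_eq_sum [Fintype ι] (φ : Module.Dual R M) (z : ι → M)
    {L : List ι} {i : ι} (hi : i ∉ L) :
    ∃ c : ι → ExteriorAlgebra R M, c i = 0 ∧
      koszulDifferential φ (L.map fun j => ExteriorAlgebra.ι R (z j)).prod =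
        ∑ j, φ (z j) • c j := by
  classical
  induction L with
  | nil => exact ⟨0, rfl, by simp [koszulDifferential_one]⟩
  | cons l L ih =>
    obtain ⟨hil, hiL⟩ := not_or.1 (mt List.mem_cons.2 hi)
    obtain ⟨c, hci, hc⟩ := ih hiL
    refine ⟨Pi.single l (L.map fun j => ExteriorAlgebra.ι R (z j)).prod -
      fun j => ExteriorAlgebra.ι R (z l) * c j, by simp [hci, hil], ?_⟩
    rw [List.map_cons, List.prod_cons, koszulDifferential_ι_mul, hc]
    simp [smul_sub, Finset.mul_sum, Pi.single_apply]

lemma prod_ι_notMem_range_koszulDifferential_sup [Fintype ι] [Module.Flat R (ExteriorAlgebra R M)]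
    {φ : Module.Dual R M} (hφ : LinearMap.range φ ≠ ⊤) (z : ι → M)
    (hsyz : ∀ a : ι → R, ∑ j, φ (z j) * a j = 0 →
      ∀ i, a i ∈ Ideal.span (Set.range fun j => φ (z j)))
    {L : List ι} (hL : L.Nodup) :
    (L.map fun j => ExteriorAlgebra.ι R (z j)).prod ∉
      LinearMap.range (koszulDifferential φ) ⊔ Ideal.span (Set.range fun j => φ (z j)) • ⊤ := by
  classical
  induction L with
  | nil =>
    have hle : Ideal.span (Set.range fun j => φ (z j)) ≤ LinearMap.range φ :=
      Ideal.span_le.2 (Set.range_subset_iff.2 fun j => LinearMap.mem_range_self φ (z j))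
    simpa using one_notMem_range_koszulDifferential_sup hφ hle
  | cons i L ih =>
    obtain ⟨hiL, hL⟩ := List.nodup_cons.1 hL
    intro hmem
    obtain ⟨_, ⟨w, rfl⟩, v, hv, hsum⟩ := Submodule.mem_sup.1 hmem
    obtain ⟨y, rfl⟩ := exists_eq_sum_smul_of_mem_span_range_smul_top hv
    obtain ⟨c, hci, hc⟩ := exists_koszulDifferential_prod_ι_eq_sum φ z hiL
    -- Applying the differential to `z i ∧ p = ∂ w + ∑ j, φ (z j) • y j` produces a relation between
    -- the `φ (z j)` whose `i`-th coefficient is `p - ∂ (y i)`.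
    set p := (L.map fun j => ExteriorAlgebra.ι R (z j)).prod
    have hdiff : ∑ j, φ (z j) • koszulDifferential φ (y j) =
        φ (z i) • p - ExteriorAlgebra.ι R (z i) * ∑ j, φ (z j) • c j := by
      have h := congrArg (koszulDifferential φ) hsum
      rwa [List.map_cons, List.prod_cons, koszulDifferential_ι_mul, hc, map_add,
        koszulDifferential_koszulDifferential, zero_add, map_sum,
        Finset.sum_congr rfl fun j _ => map_smul _ _ _] at h
    have hrel : ∑ j, φ (z j) • ((Pi.single i p : ι → ExteriorAlgebra R M) j -
        ExteriorAlgebra.ι R (z i) * c j - koszulDifferential φ (y j)) = 0 := by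
      simp [smul_sub, hdiff, Finset.mul_sum, Pi.single_apply]
    have hcoeff := mem_smul_top_of_sum_smul_eq_zero (hsyz · · i) hrel
    rw [Pi.single_eq_same, hci, mul_zero, sub_zero] at hcoeff
    refine ih hL ?_
    rw [← sub_add_cancel p (koszulDifferential φ (y i)), add_comm]
    exact Submodule.add_mem_sup (LinearMap.mem_range_self _ _) hcoeff

lemma prod_ι_eq_zero_of_finrank_lt_length [Nontrivial R] [Module.Free R M] [Module.Finite R M]
    (z : ι → M) {L : List ι} (hL : Module.finrank R M < L.length) :
    (L.map fun j => ExteriorAlgebra.ι R (z j)).prod = 0 := by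
  have : Subsingleton (⋀[R]^L.length M) := by
    rw [← Module.finrank_eq_zero_iff_of_free R, exteriorPower.finrank_eq]
    exact Nat.choose_eq_zero_of_lt hL
  calc (L.map fun j => ExteriorAlgebra.ι R (z j)).prod
      = exteriorPower.ιMulti R L.length (fun j => z (L.get j)) := by
        rw [exteriorPower.ιMulti_apply_coe, ExteriorAlgebra.ιMulti_apply]
        congr 1
        conv_lhs => rw [← List.ofFn_get L, List.map_ofFn]
        rfl
    _ = 0 := by rw [Subsingleton.elim (exteriorPower.ιMulti R L.length _) 0, Submodule.coe_zero]

theorem card_le_finrank_of_syzygies_mem_span [Fintype ι] [Module.Free R M] [Module.Finite R M]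
    {φ : Module.Dual R M} (hφ : LinearMap.range φ ≠ ⊤) {f : ι → R}
    (hf : ∀ i, f i ∈ LinearMap.range φ)
    (hsyz : ∀ a : ι → R, ∑ j, f j * a j = 0 → ∀ i, a i ∈ Ideal.span (Set.range f)) :
    Fintype.card ι ≤ Module.finrank R M := by
  classical
  have : Nontrivial R := (Submodule.nontrivial_iff R).1 (nontrivial_of_ne _ _ hφ)
  let : LinearOrder (Module.Free.ChooseBasisIndex R M) := linearOrderOfSTO WellOrderingRel
  have : Module.Free R (ExteriorAlgebra R M) :=
    Module.Free.of_basis (Module.Free.chooseBasis R M).ExteriorAlgebra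
  choose z hz using hf
  obtain rfl : (fun i => φ (z i)) = f := funext hz
  by_contra! hlt
  rw [← Finset.card_univ, ← Finset.length_toList] at hlt
  apply prod_ι_notMem_range_koszulDifferential_sup hφ z hsyz (Finset.nodup_toList Finset.univ)
  rw [prod_ι_eq_zero_of_finrank_lt_length z hlt]
  exact zero_mem _

end Koszul

section Minimal

variable {R M : Type*} [Semiring R] [AddCommMonoid M] [Module R M]

lemma exists_minimal_finset_span_eq {s : Set M} (hs : (Submodule.span R s).FG) :
    ∃ t : Finset M, ↑t ⊆ s ∧ Submodule.span R (t : Set M) = Submodule.span R s ∧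
      ∀ x ∈ t, x ∉ Submodule.span R (t \ {x} : Set M) := by
  classical
  obtain ⟨t₀, ht₀⟩ := (Submodule.fg_span_iff_fg_span_finset_subset s).1 hs
  obtain ⟨t, -, ⟨hts, hspan⟩, hmin⟩ := exists_minimal_le_of_wellFoundedLT
    (fun t : Finset M => ↑t ⊆ s ∧ Submodule.span R s = Submodule.span R (t : Set M)) t₀ ht₀
  refine ⟨t, hts, hspan.symm, fun x hx hxs => ?_⟩
  have herase : Submodule.span R s = Submodule.span R (t.erase x : Set M) := by
    rw [hspan, Finset.coe_erase, ← Submodule.span_insert_eq_span hxs, Set.insert_sdiff_singleton,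
      Set.insert_eq_of_mem (Finset.mem_coe.2 hx)]
  have hle : t ⊆ t.erase x :=
    hmin ⟨(Finset.coe_subset.2 (t.erase_subset x)).trans hts, herase⟩ (t.erase_subset x)
  exact Finset.notMem_erase x t (hle hx)

lemma exists_minimal_fin_family_span_eq {s : Set M} (hs : (Submodule.span R s).FG) :
    ∃ (r : ℕ) (f : Fin r → M), (∀ i, f i ∈ s) ∧
      Submodule.span R (Set.range f) = Submodule.span R s ∧
      ∀ i, f i ∉ Submodule.span R (f '' {i}ᶜ) := by
  obtain ⟨t, hts, hspan, hmin⟩ := exists_minimal_finset_span_eq hs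
  let f : Fin t.card → M := fun i => t.equivFin.symm i
  have hf : Function.Injective f := Subtype.val_injective.comp t.equivFin.symm.injective
  have hrange : Set.range f = t := by
    change Set.range (Subtype.val ∘ t.equivFin.symm) = _
    rw [t.equivFin.symm.surjective.range_comp, Subtype.range_coe_subtype, Finset.setOfPred_mem]
  refine ⟨t.card, f, fun i => hts (t.equivFin.symm i).2, hrange ▸ hspan, fun i => ?_⟩
  rw [Set.image_compl_eq_range_sdiff_image hf, Set.image_singleton, hrange]
  exact hmin _ (t.equivFin.symm i).2

end Minimal

section Homogeneous

variable {σ ι R : Type*} [CommRing R]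

attribute [local instance] MvPolynomial.gradedAlgebra

lemma homogeneousComponent_mul_of_isHomogeneous_left {p : MvPolynomial σ R} {e : ℕ}
    (hp : p.IsHomogeneous e) (q : MvPolynomial σ R) (d : ℕ) :
    homogeneousComponent d (p * q) =
      if e ≤ d then p * homogeneousComponent (d - e) q else 0 := by
  have hdecompose (a : MvPolynomial σ R) (m : ℕ) :
      (DirectSum.decompose (homogeneousSubmodule σ R) a m : MvPolynomial σ R) =
        homogeneousComponent m a := decomposition.decompose'_apply a m
  simpa only [hdecompose] using
    DirectSum.coe_decompose_mul_of_left_mem (homogeneousSubmodule σ R) d (b := q) hp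

lemma sum_mul_homogeneousComponent_eq_of_isHomogeneous [Fintype ι] {p : MvPolynomial σ R}
    {e : ℕ} (hp : p.IsHomogeneous e) {f a : ι → MvPolynomial σ R} {d : ι → ℕ}
    (hf : ∀ i, (f i).IsHomogeneous (d i)) (hsum : ∑ i, f i * a i = p) :
    ∑ i, (if d i ≤ e then f i * homogeneousComponent (e - d i) (a i) else 0) = p := by
  have h := congrArg (homogeneousComponent e) hsum
  rw [map_sum, homogeneousComponent_of_mem hp, if_pos rfl] at h
  simpa only [homogeneousComponent_mul_of_isHomogeneous_left (hf _)] using h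

lemma constantCoeff_eq_zero_of_sum_mul_eq_zero {k : Type*} [Field k] [Fintype ι]
    {f a : ι → MvPolynomial σ k} {d : ι → ℕ} (hf : ∀ i, (f i).IsHomogeneous (d i))
    {i : ι} (hi : f i ∉ Ideal.span (f '' {i}ᶜ)) (hrel : ∑ j, f j * a j = 0) :
    constantCoeff (a i) = 0 := by
  classical
  set J := Ideal.span (f '' {i}ᶜ)
  have hJ_homog : J.IsHomogeneous (homogeneousSubmodule σ k) := by
    refine Ideal.homogeneous_span _ _ ?_
    rintro _ ⟨j, -, rfl⟩
    exact ⟨d j, hf j⟩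
  have hmem : f i * a i ∈ J := by
    rw [← Finset.add_sum_erase _ _ (Finset.mem_univ i)] at hrel
    rw [eq_neg_of_add_eq_zero_left hrel]
    exact J.neg_mem (Ideal.sum_mem _ fun j hj => J.mul_mem_right _
      (Ideal.subset_span ⟨j, Finset.ne_of_mem_erase hj, rfl⟩))
  have hcomponent : f i * C (constantCoeff (a i)) ∈ J := by
    simpa [homogeneousComponent_mul_of_isHomogeneous_left (hf i), constantCoeff_eq] using
      homogeneousComponent_mem_of_mem hJ_homog hmem (d i)
  by_contra hc
  have hunit : IsUnit (C (σ := σ) (constantCoeff (a i))) := (isUnit_iff_ne_zero.2 hc).map C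
  exact hi ((Ideal.mul_unit_mem_iff_mem J hunit).1 hcomponent)

end Homogeneous

section Subalgebra

variable {σ k ι : Type*}

section CommRing

variable [CommRing k]

/-- The ideal of the elements of `A` with vanishing constant term. -/
noncomputable def augmentationIdeal (A : Subalgebra k (MvPolynomial σ k)) : Ideal A :=
  RingHom.ker (constantCoeff.comp (algebraMap A (MvPolynomial σ k)))

/-- The Hilbert ideal of `A`: the ideal of the whole polynomial ring generated by the elements of
`A` with vanishing constant term. -/
noncomputable def hilbertIdeal (A : Subalgebra k (MvPolynomial σ k)) :
    Ideal (MvPolynomial σ k) :=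
  (augmentationIdeal A).map (algebraMap A (MvPolynomial σ k))

variable {A : Subalgebra k (MvPolynomial σ k)}

lemma constantCoeff_eq_zero_of_isHomogeneous {p : MvPolynomial σ k} {d : ℕ} (hp : p.IsHomogeneous d)
    (hd : d ≠ 0) : constantCoeff p = 0 :=
  hp.coeff_eq_zero (by simpa using hd.symm)

lemma hilbertIdeal_eq_span_isHomogeneous (hA : ∀ p ∈ A, ∀ d, homogeneousComponent d p ∈ A) :
    hilbertIdeal A = Ideal.span {p | p ∈ A ∧ ∃ d ≠ 0, p.IsHomogeneous d} := by
  refine le_antisymm (Ideal.map_le_iff_le_comap.2 fun p hp => ?_) (Ideal.span_le.2 ?_)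
  · rw [Ideal.mem_comap, ← sum_homogeneousComponent (algebraMap A _ p)]
    refine Ideal.sum_mem _ fun d _ => ?_
    rcases eq_or_ne d 0 with rfl | hd
    · have hp0 : coeff 0 (algebraMap A (MvPolynomial σ k) p) = 0 := hp
      rw [homogeneousComponent_zero, hp0, C_0]
      exact zero_mem _
    · exact Ideal.subset_span ⟨hA p p.2 d, d, hd, homogeneousComponent_isHomogeneous d _⟩
  · rintro p ⟨hpA, d, hd, hp⟩
    exact Ideal.mem_map_of_mem (x := (⟨p, hpA⟩ : A)) _
      (constantCoeff_eq_zero_of_isHomogeneous hp hd)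

lemma hilbertIdeal_le_idealOfVars : hilbertIdeal A ≤ idealOfVars σ k := by
  refine Ideal.map_le_iff_le_comap.2 fun p hp => ?_
  rw [Ideal.mem_comap, ← pow_one (idealOfVars σ k), mem_pow_idealOfVars_iff']
  intro m hm
  obtain rfl : m = 0 := by simpa [Finsupp.degree_eq_zero_iff] using hm
  exact hp

lemma idealOfVars_ne_top [Nontrivial k] : idealOfVars σ k ≠ ⊤ := by
  rw [Ideal.ne_top_iff_one, ← pow_one (idealOfVars σ k), mem_pow_idealOfVars_iff']
  intro h
  simpa using h 0

lemma exists_minimal_homogeneous_generators [IsNoetherianRing k] [Finite σ]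
    (hA : ∀ p ∈ A, ∀ d, homogeneousComponent d p ∈ A) :
    ∃ (r : ℕ) (f : Fin r → A) (d : Fin r → ℕ), (∀ i, d i ≠ 0) ∧
      (∀ i, (f i : MvPolynomial σ k).IsHomogeneous (d i)) ∧
      Ideal.span (Set.range fun i => (f i : MvPolynomial σ k)) = hilbertIdeal A ∧
      ∀ i, (f i : MvPolynomial σ k) ∉
        Ideal.span ((fun j => (f j : MvPolynomial σ k)) '' {i}ᶜ) := by
  obtain ⟨r, f, hf, hspan, hmin⟩ := exists_minimal_fin_family_span_eq
    (IsNoetherian.noetherian (Ideal.span {p | p ∈ A ∧ ∃ d ≠ 0, p.IsHomogeneous d}))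
  choose hfA d hd hhomog using hf
  exact ⟨r, fun i => ⟨f i, hfA i⟩, d, hd, hhomog,
    hspan.trans (hilbertIdeal_eq_span_isHomogeneous hA).symm, hmin⟩

lemma span_range_eq_augmentationIdeal [Module.FaithfullyFlat A (MvPolynomial σ k)] {f : ι → A}
    (hspan : Ideal.span (Set.range fun i => (f i : MvPolynomial σ k)) = hilbertIdeal A) :
    Ideal.span (Set.range f) = augmentationIdeal A := by
  apply Ideal.map_injective_of_faithfullyFlat (B := MvPolynomial σ k)
  rw [Ideal.map_span, ← Set.range_comp]
  exact hspan

lemma mem_adjoin_range_of_isHomogeneous [Finite ι]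
    (hA : ∀ p ∈ A, ∀ d, homogeneousComponent d p ∈ A) {f : ι → A} {d : ι → ℕ} (hd : ∀ i, d i ≠ 0)
    (hf : ∀ i, (f i : MvPolynomial σ k).IsHomogeneous (d i))
    (hspan : Ideal.span (Set.range f) = augmentationIdeal A) {e : ℕ} {p : A}
    (hp : (p : MvPolynomial σ k).IsHomogeneous e) :
    p ∈ Algebra.adjoin k (Set.range f) := by
  have := Fintype.ofFinite ι
  induction e using Nat.strong_induction_on generalizing p with
  | _ e ih =>
  rcases eq_or_ne e 0 with rfl | he
  · have hconst : p = algebraMap k A (coeff 0 (p : MvPolynomial σ k)) :=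
      Subtype.ext (totalDegree_eq_zero_iff_eq_C.1 ((totalDegree_zero_iff_isHomogeneous σ).2 hp))
    exact hconst ▸ Subalgebra.algebraMap_mem _ _
  · have hpaug : p ∈ Ideal.span (Set.range f) :=
      hspan ▸ constantCoeff_eq_zero_of_isHomogeneous hp he
    obtain ⟨c, hc⟩ := Ideal.mem_span_range_iff_exists_fun.1 hpaug
    have hpsum : p = ∑ i, if d i ≤ e then
        f i * ⟨homogeneousComponent (e - d i) (c i : MvPolynomial σ k), hA _ (c i).2 _⟩ else 0 := by
      have hsum : ∑ i, (f i : MvPolynomial σ k) * (c i : MvPolynomial σ k) = p := by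
        simp [← hc, mul_comm]
      refine Subtype.ext ?_
      rw [← sum_mul_homogeneousComponent_eq_of_isHomogeneous hp hf hsum,
        AddSubmonoidClass.coe_finsetSum]
      exact Finset.sum_congr rfl fun i _ => by split_ifs <;> rfl
    rw [hpsum]
    refine Subalgebra.sum_mem _ fun i _ => ?_
    split_ifs with hi
    · exact Subalgebra.mul_mem _ (Algebra.subset_adjoin (Set.mem_range_self i))
        (ih _ (Nat.sub_lt_self (Nat.pos_of_ne_zero (hd i)) hi)
          (homogeneousComponent_isHomogeneous _ _))
    · exact Subalgebra.zero_mem _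

lemma adjoin_range_eq_top_of_span_eq_augmentationIdeal [Finite ι]
    (hA : ∀ p ∈ A, ∀ d, homogeneousComponent d p ∈ A) {f : ι → A} {d : ι → ℕ} (hd : ∀ i, d i ≠ 0)
    (hf : ∀ i, (f i : MvPolynomial σ k).IsHomogeneous (d i))
    (hspan : Ideal.span (Set.range f) = augmentationIdeal A) :
    Algebra.adjoin k (Set.range f) = ⊤ := by
  refine Algebra.eq_top_iff.2 fun p => ?_
  have hpsum : p = ∑ e ∈ Finset.range ((p : MvPolynomial σ k).totalDegree + 1),
      (⟨homogeneousComponent e (p : MvPolynomial σ k), hA p p.2 e⟩ : A) :=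
    Subtype.ext (by simp [sum_homogeneousComponent])
  rw [hpsum]
  exact Subalgebra.sum_mem _ fun e _ =>
    mem_adjoin_range_of_isHomogeneous hA hd hf hspan (homogeneousComponent_isHomogeneous e _)

end CommRing

section Field

variable [Field k] {A : Subalgebra k (MvPolynomial σ k)}

lemma mem_hilbertIdeal_of_sum_mul_eq_zero [Fintype ι] [Module.Flat A (MvPolynomial σ k)]
    {f : ι → A} {d : ι → ℕ} (hf : ∀ i, (f i : MvPolynomial σ k).IsHomogeneous (d i)) {i : ι}
    (hi : (f i : MvPolynomial σ k) ∉ Ideal.span ((fun j => (f j : MvPolynomial σ k)) '' {i}ᶜ))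
    {u : ι → MvPolynomial σ k} (hu : ∑ j, (f j : MvPolynomial σ k) * u j = 0) :
    u i ∈ hilbertIdeal A := by
  have hrel (a : ι → A) (ha : ∑ j, f j * a j = 0) : a i ∈ augmentationIdeal A := by
    refine constantCoeff_eq_zero_of_sum_mul_eq_zero (a := fun j => (a j : MvPolynomial σ k))
      hf hi ?_
    simpa only [AddSubmonoidClass.coe_finsetSum, MulMemClass.coe_mul, ZeroMemClass.coe_zero]
      using congrArg Subtype.val ha
  have hmem := mem_smul_top_of_sum_smul_eq_zero hrel hu
  rwa [Ideal.smul_top_eq_map] at hmem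

lemma card_le_card_of_hilbertIdeal_eq_span [Fintype ι] [Fintype σ]
    [Module.Flat A (MvPolynomial σ k)] {f : ι → A} {d : ι → ℕ}
    (hf : ∀ i, (f i : MvPolynomial σ k).IsHomogeneous (d i))
    (hspan : Ideal.span (Set.range fun i => (f i : MvPolynomial σ k)) = hilbertIdeal A)
    (hmin : ∀ i, (f i : MvPolynomial σ k) ∉
      Ideal.span ((fun j => (f j : MvPolynomial σ k)) '' {i}ᶜ)) :
    Fintype.card ι ≤ Fintype.card σ := by
  have hrange : LinearMap.range (Fintype.linearCombination (MvPolynomial σ k) (X (R := k))) =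
      idealOfVars σ k := Fintype.range_linearCombination _ _
  have hf_mem (i : ι) : (f i : MvPolynomial σ k) ∈ idealOfVars σ k :=
    hilbertIdeal_le_idealOfVars (hspan ▸ Ideal.subset_span (Set.mem_range_self i))
  rw [← Module.finrank_fintype_fun_eq_card (MvPolynomial σ k) (η := σ)]
  exact card_le_finrank_of_syzygies_mem_span (hrange ▸ idealOfVars_ne_top)
    (fun i => hrange ▸ hf_mem i)
    (fun u hu i => hspan ▸ mem_hilbertIdeal_of_sum_mul_eq_zero hf (hmin i) hu)

end Field

end Subalgebra

section TranscendenceDegree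

universe v w

lemma exists_bijective_aeval_of_adjoin_range_eq_top {ι k : Type*} {σ : Type w} {B : Type v}
    [CommRing k] [CommRing B] [IsDomain B] [Algebra k B] [FaithfulSMul k B] [Finite σ]
    (htrdeg : Cardinal.lift.{v} (Cardinal.mk σ) ≤ Cardinal.lift.{w} (Algebra.trdeg k B))
    {f : ι → B} (hf : Algebra.adjoin k (Set.range f) = ⊤) (e : ι ↪ σ) :
    ∃ g : σ → B, Function.Bijective (aeval (R := k) g : MvPolynomial σ k →ₐ[k] B) := by
  let g : σ → B := Function.extend e f 0
  have hg : Algebra.adjoin k (Set.range g) = ⊤ := by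
    refine top_unique (hf ▸ Algebra.adjoin_mono (Set.range_subset_iff.2 fun i => ⟨e i, ?_⟩))
    exact e.injective.extend_apply f 0 i
  have : Algebra.IsAlgebraic (Algebra.adjoin k (Set.range g)) B :=
    ⟨fun b => isAlgebraic_algebraMap
      (⟨b, hg ▸ Algebra.mem_top⟩ : Algebra.adjoin k (Set.range g))⟩
  have hbasis : IsTranscendenceBasis k g :=
    Algebra.IsAlgebraic.isTranscendenceBasis_of_lift_le_trdeg_of_finite k g htrdeg
  refine ⟨g, hbasis.1, ?_⟩
  rw [← AlgHom.range_eq_top, ← Algebra.adjoin_range_eq_range_aeval, hg]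

lemma lift_mk_eq_trdeg {σ k : Type*} [CommRing k] [IsDomain k]
    (A : Subalgebra k (MvPolynomial σ k)) [Algebra.IsAlgebraic A (MvPolynomial σ k)] :
    Cardinal.lift (Cardinal.mk σ) = Algebra.trdeg k A := by
  have h := trdeg_add_eq k A (A := MvPolynomial σ k)
  rw [trdeg_eq_zero (R := A), add_zero, MvPolynomial.trdeg_of_isDomain] at h
  exact h.symm

end TranscendenceDegree

theorem invariants_polynomial_algebra_general {σ k : Type*} [Finite σ] [Field k]
    (A : Subalgebra k (MvPolynomial σ k)) (hA : ∀ p ∈ A, ∀ d, homogeneousComponent d p ∈ A)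
    [Module.FaithfullyFlat A (MvPolynomial σ k)] [Algebra.IsAlgebraic A (MvPolynomial σ k)] :
    ∃ f : σ → A, Function.Bijective (aeval (R := k) f : MvPolynomial σ k →ₐ[k] A) := by
  have := Fintype.ofFinite σ
  obtain ⟨r, f, d, hd, hf, hspan, hmin⟩ := exists_minimal_homogeneous_generators hA
  have hcard : Fintype.card (Fin r) ≤ Fintype.card σ :=
    card_le_card_of_hilbertIdeal_eq_span hf hspan hmin
  obtain ⟨e⟩ := Function.Embedding.nonempty_of_card_le hcard
  have hadjoin : Algebra.adjoin k (Set.range f) = ⊤ :=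
    adjoin_range_eq_top_of_span_eq_augmentationIdeal hA hd hf
      (span_range_eq_augmentationIdeal hspan)
  exact exists_bijective_aeval_of_adjoin_range_eq_top
    (by rw [← lift_mk_eq_trdeg A]; simp) hadjoin e

section GroupAction

variable {n : ℕ} {k : Type*} [Field k]

lemma glAct_eq_bind₁ (g : LinearMap.GeneralLinearGroup k (Fin n → k)) :
    glAct g = bind₁ (LinearMap.toMatrix' (g⁻¹).val).toMvPolynomial := by
  refine algHom_ext fun i => ?_
  simp [glAct, Matrix.toMvPolynomial, LinearMap.toMatrix'_apply, C_mul_X_eq_monomial]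

lemma glAct_one : glAct (1 : LinearMap.GeneralLinearGroup k (Fin n → k)) = 1 := by
  refine algHom_ext fun i => ?_
  simp [glAct_eq_bind₁]

lemma glAct_mul (g h : LinearMap.GeneralLinearGroup k (Fin n → k)) :
    glAct (g * h) = glAct g * glAct h := by
  refine algHom_ext fun i => ?_
  simp [glAct_eq_bind₁, LinearMap.toMatrix'_mul, Matrix.toMvPolynomial_mul]

lemma isHomogeneous_glAct (g : LinearMap.GeneralLinearGroup k (Fin n → k))
    {p : MvPolynomial (Fin n) k} {d : ℕ} (hp : p.IsHomogeneous d) :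
    (glAct g p).IsHomogeneous d := by
  rw [glAct_eq_bind₁, ← one_mul d]
  exact hp.aeval _ (Matrix.toMvPolynomial_isHomogeneous _)

lemma homogeneousComponent_glAct (g : LinearMap.GeneralLinearGroup k (Fin n → k))
    (p : MvPolynomial (Fin n) k) (d : ℕ) :
    homogeneousComponent d (glAct g p) = glAct g (homogeneousComponent d p) := by
  conv_lhs => rw [← sum_homogeneousComponent p]
  simp_rw [map_sum, homogeneousComponent_of_mem
    (isHomogeneous_glAct g (homogeneousComponent_isHomogeneous _ p)), Finset.sum_ite_eq,
    Finset.mem_range, Nat.lt_succ_iff]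
  split_ifs with hd
  · rfl
  · rw [homogeneousComponent_eq_zero d p (not_le.1 hd), map_zero]

variable {G : Subgroup (LinearMap.GeneralLinearGroup k (Fin n → k))}

lemma mem_invariants_iff {p : MvPolynomial (Fin n) k} :
    p ∈ invariants n k G ↔ ∀ g ∈ G, glAct g p = p := by
  simp [invariants, Algebra.mem_iInf]

lemma homogeneousComponent_mem_invariants {p : MvPolynomial (Fin n) k}
    (hp : p ∈ invariants n k G) (d : ℕ) : homogeneousComponent d p ∈ invariants n k G :=
  mem_invariants_iff.2 fun g hg => by
    rw [← homogeneousComponent_glAct, mem_invariants_iff.1 hp g hg]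

/-- The action `glAct` bundled as a homomorphism from `GL(V)` to the monoid of ring endomorphisms of
`k[V]`, for transport of the `MulSemiringAction` of that monoid. -/
noncomputable def glActRingHom (n : ℕ) (k : Type*) [Field k] :
    LinearMap.GeneralLinearGroup k (Fin n → k) →*
      (MvPolynomial (Fin n) k →+* MvPolynomial (Fin n) k) where
  toFun g := glAct g
  map_one' := congrArg RingHomClass.toRingHom glAct_one
  map_mul' g h := congrArg RingHomClass.toRingHom (glAct_mul g h)

lemma isIntegral_invariants [Finite G] :
    Algebra.IsIntegral (invariants n k G) (MvPolynomial (Fin n) k) := by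
  let : MulSemiringAction G (MvPolynomial (Fin n) k) :=
    MulSemiringAction.compHom _ ((glActRingHom n k).comp G.subtype)
  have : Algebra.IsInvariant (invariants n k G) (MvPolynomial (Fin n) k) G :=
    ⟨fun p hp => ⟨⟨p, mem_invariants_iff.2 fun g hg => hp ⟨g, hg⟩⟩, rfl⟩⟩
  exact Algebra.IsInvariant.isIntegral _ _ G

end GroupAction

/-- if for a finite subgroup `W ⊂ GL(V)` with `char k ∤ |W|` the module
`k[V]` is free over `k[V]^W`, then `k[V]^W` is a free polynomial algebra on `dim V`
generators: there are `n = dim V` invariant polynomials `f_1, …, f_n` such that the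
induced map `k[y_1,…,y_n] → k[V]^W`, `y_i ↦ f_i`, is an isomorphism. -/
theorem invariants_polynomial_algebra {n : ℕ} {k : Type*} [Field k]
    (G : Subgroup (LinearMap.GeneralLinearGroup k (Fin n → k))) [Fintype G]
    (hcard : (Fintype.card G : k) ≠ 0)
    (hfree : Module.Free ↥(invariants n k G) (MvPolynomial (Fin n) k)) :
    ∃ f : Fin n → ↥(invariants n k G),
      Function.Bijective (aeval (R := k) f : MvPolynomial (Fin n) k →ₐ[k] _) := by
  have := isIntegral_invariants (G := G)
  exact invariants_polynomial_algebra_general (invariants n k G)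
    fun _ hp => homogeneousComponent_mem_invariants hp
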